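/- For all sufficiently large n and every m ≥ n, there exists a probability measure ν on ℤ, supported on positive integers of size at most e^(3^(nm)), which is (1/2)-balanced, such that if A is a random n×m integer matrix with independent entries each distributed according to ν, then P(A : ℤ^m → ℤ^n is surjective) ≤ e^(−n). (One may take ν to be the law of ∏_{p ∈ P'} p, where P' is a uniformly random subset of the set of the first 2^(nm)·n primes, each prime included independently with probability 1/2.) -/

import Mathlib

open MeasureTheory Filter

def IsBalanced (ε : ℝ) (ν : Measure ℤ) : Prop :=
  ∀ p : ℕ, p.Prime → ∀ r : ZMod p, ν {x : ℤ | (x : ZMod p) = r} ≤ ENNReal.ofReal (1 - ε)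

/-- The law of a random `n × m` integer matrix whose entries are independent with laws `ν i j`:
the product measure on the space of matrices (viewed as functions `Fin n → Fin m → ℤ`). -/
noncomputable def matrixLaw {n m : ℕ} (ν : Fin n → Fin m → Measure ℤ) :
    Measure (Fin n → Fin m → ℤ) :=
  Measure.pi fun i => Measure.pi fun j => ν i j

/-!
The measure is the law of the product of a uniformly random set of primes `p ≤ 4 ^ m`. Given a
prime `p`, let `q = p` if `p ≤ 4 ^ m` and `q = 2` otherwise. Toggling the membership of `q` in the
random set changes the product modulo `p`, so every residue class has probability at most `1 / 2`.

If the matrix is surjective, then each of its rows is primitive. A given prime divides all the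
entries of a row with probability at least `2 ^ (-m)`, and the events that it belongs to all `m`
sets of the row are independent over the primes. There are at least `2 ^ m` of them by Chebyshev's
bound, so a row is primitive with probability at most `(1 - 2 ^ (-m)) ^ (2 ^ m) ≤ e ^ (-1)`, and the
`n` rows are independent.
-/

section Primes

/- This is the chain `N log 2 - log (N + 1) ≤ ψ(N) ≤ π(N) log N` at `N = 2 ^ k`. -/
theorem two_pow_le_mul_primeCounting (k : ℕ) :
    2 ^ k ≤ k * Nat.primeCounting (2 ^ k) + k + 1 := by
  have hlog2 : 0 < Real.log 2 := Real.log_pos one_lt_two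
  have hlog : Real.log ((2 : ℝ) ^ k + 1) ≤ (k + 1) * Real.log 2 := by
    calc Real.log ((2 : ℝ) ^ k + 1) ≤ Real.log (2 ^ (k + 1)) := by
          gcongr
          rw [pow_succ]
          linarith [one_le_pow₀ (n := k) (one_le_two : (1 : ℝ) ≤ 2)]
      _ = (k + 1) * Real.log 2 := by rw [Real.log_pow]; push_cast; rfl
  have hpsi : (2 : ℝ) ^ k * Real.log 2 - Real.log (2 ^ k + 1) ≤
      Nat.primeCounting (2 ^ k) * (k * Real.log 2) := by
    simpa using (Chebyshev.psi_ge (2 ^ k)).trans (Chebyshev.psi_le_primeCounting_mul_log (2 ^ k))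
  have hmul : (2 : ℝ) ^ k * Real.log 2 ≤
      (k * Nat.primeCounting (2 ^ k) + k + 1) * Real.log 2 := by linarith
  exact_mod_cast le_of_mul_le_mul_right hmul hlog2

theorem two_mul_add_one_le_two_pow {m : ℕ} (hm : 3 ≤ m) : 2 * m + 1 ≤ 2 ^ m := by
  induction m, hm using Nat.le_induction with
  | base => norm_num
  | succ m _ ih => rw [pow_succ]; omega

theorem two_pow_le_primeCounting_four_pow {m : ℕ} (hm : 0 < m) :
    2 ^ m ≤ Nat.primeCounting (4 ^ m) := by
  obtain rfl | rfl | hm3 : m = 1 ∨ m = 2 ∨ 3 ≤ m := by omega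
  · decide
  · decide
  · by_contra! hlt
    have hcheb : 4 ^ m ≤ 2 * m * Nat.primeCounting (4 ^ m) + 2 * m + 1 := by
      simpa only [pow_mul, Nat.reducePow] using two_pow_le_mul_primeCounting (2 * m)
    have hpow : (4 : ℕ) ^ m = 2 ^ m * 2 ^ m := mul_pow 2 2 m
    have hexp := two_mul_add_one_le_two_pow hm3
    nlinarith

theorem four_pow_four_pow_le_exp {m : ℕ} (hm : 0 < m) :
    (4 : ℝ) ^ 4 ^ m ≤ Real.exp (3 ^ (2 * m)) := by
  have hexp : (4 : ℝ) ≤ Real.exp 2 := by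
    calc (4 : ℝ) = (1 + 1) ^ 2 := by norm_num
      _ ≤ Real.exp 1 ^ 2 := by gcongr; exact Real.add_one_le_exp 1
      _ = Real.exp 2 := by rw [← Real.exp_nat_mul]; norm_num
  have hpow : (2 : ℝ) * 4 ^ m ≤ 3 ^ (2 * m) := by
    calc (2 : ℝ) * 4 ^ m ≤ 2 ^ m * 4 ^ m := by
          gcongr; exact le_self_pow₀ one_le_two hm.ne'
      _ = 8 ^ m := by rw [← mul_pow]; norm_num
      _ ≤ 9 ^ m := by gcongr; norm_num
      _ = 3 ^ (2 * m) := by rw [pow_mul]; norm_num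
  calc (4 : ℝ) ^ 4 ^ m ≤ Real.exp 2 ^ 4 ^ m := by gcongr
    _ = Real.exp (2 * 4 ^ m) := by rw [← Real.exp_nat_mul, mul_comm]; push_cast; rfl
    _ ≤ Real.exp (3 ^ (2 * m)) := by gcongr

end Primes

theorem prod_symmDiff_singleton_ne {α R : Type*} [DecidableEq α] [CommMonoidWithZero R]
    [IsCancelMulZero R] {g : α → R} {q : α} (hq : g q ≠ 1) (hg : ∀ a ≠ q, g a ≠ 0)
    (S : Finset α) : ∏ a ∈ symmDiff S {q}, g a ≠ ∏ a ∈ S, g a := by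
  have := nontrivial_of_ne _ _ hq
  have hinsert : ∀ T : Finset α, q ∉ T → ∏ a ∈ insert q T, g a ≠ ∏ a ∈ T, g a := by
    intro T hqT
    have hT : ∏ a ∈ T, g a ≠ 0 :=
      Finset.prod_ne_zero_iff.2 fun a ha => hg a (ne_of_mem_of_not_mem ha hqT)
    rw [Finset.prod_insert hqT]
    exact fun h => hq (mul_right_cancel₀ hT (h.trans (one_mul _).symm))
  by_cases hqS : q ∈ S
  · have hflip : symmDiff S {q} = S.erase q := by grind [Finset.mem_symmDiff]
    rw [hflip]
    simpa only [Finset.insert_erase hqS] using (hinsert (S.erase q) (S.notMem_erase q)).symm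
  · have hflip : symmDiff S {q} = insert q S := by grind [Finset.mem_symmDiff]
    rw [hflip]
    exact hinsert S hqS

section RandomSubsets

open ProbabilityTheory
open scoped Finset

theorem uniformOn_univ_le_inv_two_of_mapsTo_compl {Ω : Type*} [Finite Ω] [MeasurableSpace Ω]
    [MeasurableSingletonClass Ω] {f : Ω → Ω} (hf : f.Injective) {B : Set Ω}
    (hB : Set.MapsTo f B Bᶜ) : uniformOn Set.univ B ≤ 2⁻¹ := by
  have := Fintype.ofFinite Ω
  have himage : uniformOn Set.univ (f '' B) = uniformOn Set.univ B := by
    rw [uniformOn_univ, uniformOn_univ, Measure.count_injective_image hf]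
  have hdisj : Disjoint B (f '' B) := Set.disjoint_left.2 fun _ hx hfx =>
    hB.image_subset hfx hx
  rw [ENNReal.le_inv_iff_mul_le, mul_two]
  calc uniformOn Set.univ B + uniformOn Set.univ B
      = uniformOn Set.univ (B ∪ f '' B) := by
        rw [measure_union hdisj (Set.toFinite _).measurableSet, himage]
    _ ≤ 1 := prob_le_one

variable {ι α : Type*} [Fintype ι] [Fintype α]

/- Recording, for each `a`, the set of indices `i` with `a ∈ S i` turns a family with empty
intersection into an arbitrary function from `α` to the proper subsets of `ι`. -/
theorem card_forall_exists_notMem [DecidableEq ι] [DecidableEq α] :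
    #{S : ι → Finset α | ∀ a, ∃ i, a ∉ S i} = (2 ^ Fintype.card ι - 1) ^ Fintype.card α := by
  calc #{S : ι → Finset α | ∀ a, ∃ i, a ∉ S i}
      = #(Fintype.piFinset fun _ : α => ({Finset.univ}ᶜ : Finset (Finset ι))) :=
        Finset.card_nbij' (fun S a => {i | a ∈ S i}) (fun T i => {a | i ∈ T a})
          (by simp [Set.MapsTo, Finset.eq_univ_iff_forall])
          (by simp [Set.MapsTo, Finset.eq_univ_iff_forall])
          (by simp [Set.LeftInvOn]) (by simp [Set.LeftInvOn, Set.RightInvOn])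
    _ = (2 ^ Fintype.card ι - 1) ^ Fintype.card α := by simp [Finset.card_compl]

theorem pi_uniformOn_univ_forall_exists_notMem :
    (Measure.pi fun _ : ι => uniformOn (Set.univ : Set (Finset α))).real
      {S | ∀ a, ∃ i, a ∉ S i} = (1 - (2 ^ Fintype.card ι)⁻¹) ^ Fintype.card α := by
  classical
  have hcount : (Measure.count {S : ι → Finset α | ∀ a, ∃ i, a ∉ S i}).toReal =
      ((2 : ℝ) ^ Fintype.card ι - 1) ^ Fintype.card α := by
    rw [← Finset.coe_filter_univ, Measure.count_apply_finset, card_forall_exists_notMem,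
      ENNReal.toReal_natCast, Nat.cast_pow, Nat.cast_pred (by positivity)]
    push_cast
    rfl
  have hcard : (Fintype.card (ι → Finset α) : ℝ) = (2 ^ Fintype.card ι) ^ Fintype.card α := by
    simp [← pow_mul, mul_comm]
  rw [← uniformOn_pi, Set.pi_univ, measureReal_def, uniformOn_univ, ENNReal.toReal_div,
    ENNReal.toReal_natCast, hcount, hcard, ← div_pow, sub_div, div_self (by positivity), one_div]

end RandomSubsets

/-- Primitive vectors, the necessary condition on the rows of a surjective matrix. They are encoded
through common divisors; over `ℤ` this says that the coordinates have greatest common divisor `1`,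
over a general ring it is weaker than unimodularity. -/
def IsPrimitiveVec {ι R : Type*} [CommMonoid R] (x : ι → R) : Prop :=
  ∀ d, (∀ i, d ∣ x i) → IsUnit d

section SubsetProducts

open ProbabilityTheory

variable {α : Type*}

/-- The law of the random product `∏ a ∈ S, w a`, where `S` is a uniformly random subset of
the finite type `α`: each factor `w a` is included independently with probability `1 / 2`. -/
noncomputable def subsetProdLaw (w : α → ℤ) : Measure ℤ :=
  (uniformOn Set.univ).map fun S : Finset α => ∏ a ∈ S, w a

variable [Finite α] {w : α → ℤ}

theorem subsetProdLaw_apply (B : Set ℤ) :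
    subsetProdLaw w B = uniformOn Set.univ {S : Finset α | ∏ a ∈ S, w a ∈ B} :=
  Measure.map_apply (measurable_of_finite _) .of_discrete

instance : IsProbabilityMeasure (subsetProdLaw w) :=
  Measure.isProbabilityMeasure_map (measurable_of_finite _).aemeasurable

theorem ae_subsetProdLaw_mem_Icc {α : Type*} [Fintype α] {w : α → ℤ} (hw : ∀ a, 0 < w a) :
    ∀ᵐ x ∂subsetProdLaw w, x ∈ Set.Icc 1 (∏ a, w a) := by
  rw [subsetProdLaw, ae_map_iff (measurable_of_finite _).aemeasurable .of_discrete]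
  exact .of_forall fun S => ⟨Finset.prod_pos fun a _ => hw a,
    Finset.prod_le_prod_of_subset_of_one_le (Finset.subset_univ S)
      (fun a _ => (hw a).le) fun a _ _ => hw a⟩

theorem subsetProdLaw_cast_eq_le {R : Type*} [CommRing R] [NoZeroDivisors R] {q : α}
    (hq : (w q : R) ≠ 1) (hw : ∀ a ≠ q, (w a : R) ≠ 0) (r : R) :
    subsetProdLaw w {x | (x : R) = r} ≤ 2⁻¹ := by
  classical
  rw [subsetProdLaw_apply]
  refine uniformOn_univ_le_inv_two_of_mapsTo_compl (symmDiff_left_injective {q}) fun S hS hS' => ?_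
  refine prod_symmDiff_singleton_ne (g := fun a => (w a : R)) hq hw S ?_
  simp only [Set.mem_ofPred_eq, Int.cast_prod] at hS hS'
  exact hS'.trans hS.symm

theorem isBalanced_subsetProdLaw (hcop : Pairwise fun a b => IsCoprime (w a) (w b)) {t : α}
    (ht : w t = 2) : IsBalanced (1 / 2) (subsetProdLaw w) := by
  intro p hp r
  have : Fact p.Prime := ⟨hp⟩
  obtain ⟨q, hq, hne⟩ : ∃ q, (w q : ZMod p) ≠ 1 ∧ ∀ a ≠ q, (w a : ZMod p) ≠ 0 := by
    by_cases hdvd : ∃ q, (w q : ZMod p) = 0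
    · obtain ⟨q, hq⟩ := hdvd
      refine ⟨q, by simp [hq], fun a ha h => ?_⟩
      have := (hcop ha).map (Int.castRingHom (ZMod p))
      simp [hq, h] at this
    · exact ⟨t, by simp [ht, ← one_add_one_eq_two], fun a _ h => hdvd ⟨a, h⟩⟩
  convert subsetProdLaw_cast_eq_le hq hne r
  norm_num [ENNReal.ofReal_div_of_pos]

theorem pi_subsetProdLaw_isPrimitiveVec_le {ι α : Type*} [Fintype ι] [Fintype α] {w : α → ℤ}
    (hw : ∀ a, ¬ IsUnit (w a)) :
    (Measure.pi fun _ : ι => subsetProdLaw w).real {x | IsPrimitiveVec x} ≤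
      (1 - (2 ^ Fintype.card ι)⁻¹) ^ Fintype.card α := by
  have hmeas : Measurable fun (S : ι → Finset α) i => ∏ a ∈ S i, w a := measurable_of_finite _
  unfold subsetProdLaw
  rw [← Measure.pi_map_pi fun _ => (measurable_of_finite _).aemeasurable,
    map_measureReal_apply hmeas (Set.to_countable _).measurableSet,
    ← pi_uniformOn_univ_forall_exists_notMem]
  refine measureReal_mono fun S hS a => ?_
  by_contra! hmem
  exact hw a (hS (w a) fun i => Finset.dvd_prod_of_mem w (hmem i))

end SubsetProducts

section Matrices

theorem isPrimitiveVec_row_of_surjective_mulVecLin {R m n : Type*} [CommRing R] [Fintype m]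
    {A : Matrix n m R} (hA : Function.Surjective A.mulVecLin) (i : n) :
    IsPrimitiveVec (A i) := by
  classical
  intro d hd
  obtain ⟨v, hv⟩ := hA (Pi.single i 1)
  have hrow : ∑ j, A i j * v j = 1 := by
    simpa [Matrix.mulVec, dotProduct] using congrFun hv i
  rw [isUnit_iff_dvd_one, ← hrow]
  exact Finset.dvd_sum fun j _ => (hd j).mul_right (v j)

theorem matrixLaw_surjective_le_prod_isPrimitiveVec {n m : ℕ} (ν : Fin n → Fin m → Measure ℤ)
    [∀ i j, IsFiniteMeasure (ν i j)] :
    (matrixLaw ν).real {A | Function.Surjective (Matrix.of A).mulVecLin} ≤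
      ∏ i, (Measure.pi (ν i)).real {x | IsPrimitiveVec x} := by
  have hsub : {A : Fin n → Fin m → ℤ | Function.Surjective (Matrix.of A).mulVecLin} ⊆
      Set.univ.pi fun _ => {x | IsPrimitiveVec x} :=
    fun _ hA i _ => isPrimitiveVec_row_of_surjective_mulVecLin hA i
  unfold matrixLaw
  refine (measureReal_mono hsub).trans_eq ?_
  rw [measureReal_def, Measure.pi_pi, ENNReal.toReal_prod]
  rfl

theorem one_sub_inv_pow_le_exp_neg_one {x : ℝ} (hx : 1 ≤ x) {k : ℕ} (hk : x ≤ k) :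
    (1 - x⁻¹) ^ k ≤ Real.exp (-1) := by
  have hx0 : 0 < x := by linarith
  calc (1 - x⁻¹) ^ k ≤ Real.exp (-x⁻¹) ^ k := by
        gcongr
        · exact sub_nonneg.2 (inv_le_one_of_one_le₀ hx)
        · exact Real.one_sub_le_exp_neg x⁻¹
    _ = Real.exp (-(k / x)) := by rw [← Real.exp_nat_mul]; ring_nf
    _ ≤ Real.exp (-1) := by
        gcongr
        exact (one_le_div hx0).2 hk

theorem matrixLaw_subsetProdLaw_surjective_le {α : Type*} [Fintype α] {w : α → ℤ}
    (hw : ∀ a, ¬ IsUnit (w a)) {m : ℕ} (hcard : 2 ^ m ≤ Fintype.card α) (n : ℕ) :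
    (matrixLaw fun (_ : Fin n) (_ : Fin m) => subsetProdLaw w).real
      {A | Function.Surjective (Matrix.of A).mulVecLin} ≤ Real.exp (-n) := by
  refine (matrixLaw_surjective_le_prod_isPrimitiveVec _).trans ?_
  calc _ ≤ ∏ _i : Fin n, Real.exp (-1) := by
        gcongr
        refine (pi_subsetProdLaw_isPrimitiveVec_le hw).trans ?_
        rw [Fintype.card_fin]
        exact one_sub_inv_pow_le_exp_neg_one (one_le_pow₀ one_le_two) (mod_cast hcard)
    _ = Real.exp (-n) := by simp [← Real.exp_nat_mul]

end Matrices

theorem stmt9_general {m : ℕ} (hm : 0 < m) : ∃ ν : Measure ℤ,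
    IsProbabilityMeasure ν ∧
    (∀ᵐ x : ℤ ∂ν, 0 < x ∧ (x : ℝ) ≤ Real.exp ((3 : ℝ) ^ (2 * m))) ∧
    IsBalanced (1 / 2) ν ∧
    ∀ n : ℕ, ((matrixLaw fun _ : Fin n => fun _ : Fin m => ν)
      {A | Function.Surjective (Matrix.of A).mulVecLin}).toReal ≤ Real.exp (-(n : ℝ)) := by
  let w : Nat.primesLE (4 ^ m) → ℤ := fun p => (p : ℕ)
  have hprime (p : Nat.primesLE (4 ^ m)) : (p : ℕ).Prime := Nat.prime_of_mem_primesLE p.2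
  have hprod : ((∏ p, w p : ℤ) : ℝ) ≤ Real.exp (3 ^ (2 * m)) := by
    have : ∏ p, w p = primorial (4 ^ m) := by
      rw [primorial_eq_prod_primesLE, Nat.cast_prod,
        ← Finset.prod_coe_sort _ fun p : ℕ => (p : ℤ)]
    rw [this]
    exact le_trans (mod_cast primorial_le_four_pow (4 ^ m)) (four_pow_four_pow_le_exp hm)
  have htwo : 2 ∈ Nat.primesLE (4 ^ m) :=
    Nat.mem_primesLE.2 ⟨le_trans (by norm_num) (Nat.le_self_pow hm.ne' 4), Nat.prime_two⟩
  refine ⟨subsetProdLaw w, inferInstance, ?_, ?_, ?_⟩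
  · filter_upwards [ae_subsetProdLaw_mem_Icc fun p => Int.natCast_pos.2 (hprime p).pos] with x hx
    exact ⟨hx.1, (Int.cast_le.2 hx.2).trans hprod⟩
  · refine isBalanced_subsetProdLaw (t := ⟨2, htwo⟩) (fun p q hpq => ?_) rfl
    exact Nat.isCoprime_iff_coprime.2
      ((Nat.coprime_primes (hprime p) (hprime q)).2 (Subtype.coe_ne_coe.2 hpq))
  · refine matrixLaw_subsetProdLaw_surjective_le (fun p => ?_) ?_
    · exact (Nat.prime_iff_prime_int.1 (hprime p)).not_isUnit
    · rw [Fintype.card_coe, Nat.primesLE_card_eq_primeCounting]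
      exact two_pow_le_primeCounting_four_pow hm

theorem stmt9 : ∃ N : ℕ, ∀ n ≥ N, ∀ m ≥ n, ∃ ν : Measure ℤ,
    IsProbabilityMeasure ν ∧
    ν {x : ℤ | ¬ (0 < x ∧ (x : ℝ) ≤ Real.exp ((3 : ℝ) ^ (n * m)))} = 0 ∧
    IsBalanced (1 / 2) ν ∧
    ((matrixLaw fun _ : Fin n => fun _ : Fin m => ν)
        {A | Function.Surjective (Matrix.of A).mulVecLin}).toReal ≤ Real.exp (-(n : ℝ)) := by
  refine ⟨2, fun n hn m hm => ?_⟩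
  obtain ⟨ν, hprob, hsupp, hbal, hsurj⟩ := stmt9_general (m := m) (by omega)
  exact ⟨ν, hprob, hsupp.mono fun x hx => ⟨hx.1, hx.2.trans (by gcongr; norm_num)⟩, hbal, hsurj n⟩
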